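/- Let K, n ∈ ℕ and let (U, E) be a K-fat model of the (2n × n)-grid H in a graph G. Then for every i ≤ n, every set W ⊆ V(G) consisting of exactly one vertex from each branch set U_x with x a vertex of the i-th row of H is K-fat n-path-connected in G. -/

import Mathlib

open SimpleGraph

namespace CGT

/-- Distance between two vertex sets, as an extended natural number. -/
noncomputable def sDist {V : Type*} (G : SimpleGraph V) (U U' : Set V) : ℕ∞ :=
  ⨅ (u : U) (v : U'), G.edist u.1 v.1

/-- The ball of radius `r` around a vertex set `U`. -/
def gBall {V : Type*} (G : SimpleGraph V) (U : Set V) (r : ℕ) : Set V :=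
  {v | ∃ u ∈ U, G.edist u v ≤ (r : ℕ∞)}

/-- A set of vertices is connected if the induced subgraph is connected. -/
def SetConn {V : Type*} (G : SimpleGraph V) (U : Set V) : Prop :=
  (G.induce U).Connected

/-- The vertex set of a walk. -/
def walkSupp {V : Type*} {G : SimpleGraph V} {a b : V} (p : G.Walk a b) : Set V :=
  {v | v ∈ p.support}

/-- `X` separates `Y` and `Z` in `G`: every path with one end in `Y` and one in `Z`
contains a vertex of `X`. -/
def Separates {V : Type*} (G : SimpleGraph V) (X Y Z : Set V) : Prop :=
  ∀ ⦃y z : V⦄, y ∈ Y → z ∈ Z → ∀ p : G.Walk y z, p.IsPath → ∃ x ∈ X, x ∈ p.support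

/-- `f` is an `(M,A)`-quasi-isometry from `G` to `H`.  The two-sided distance bound
`M⁻¹ d_G(u,v) - A ≤ d_H(f u, f v) ≤ M d_G(u,v) + A` is stated multiplied out over `ℕ∞`. -/
structure IsQI {V V' : Type*} (M A : ℕ) (G : SimpleGraph V) (H : SimpleGraph V')
    (f : V → V') : Prop where
  upper : ∀ u v : V, H.edist (f u) (f v) ≤ (M : ℕ∞) * G.edist u v + (A : ℕ∞)
  lower : ∀ u v : V, G.edist u v ≤ (M : ℕ∞) * H.edist (f u) (f v) + (M : ℕ∞) * (A : ℕ∞)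
  dense : ∀ w : V', ∃ v : V, H.edist w (f v) ≤ (A : ℕ∞)

/-- `G` is `(M,A)`-quasi-isometric to `H`. -/
def QIsometric {V V' : Type*} (M A : ℕ) (G : SimpleGraph V) (H : SimpleGraph V') : Prop :=
  ∃ f : V → V', IsQI M A G H f

/-- `X` is a minor of `G`. -/
def HasMinor {V W : Type*} (G : SimpleGraph V) (X : SimpleGraph W) : Prop :=
  ∃ U : W → Set V,
    (∀ x, (U x).Nonempty) ∧ (∀ x, SetConn G (U x)) ∧
    (∀ ⦃x y⦄, x ≠ y → Disjoint (U x) (U y)) ∧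
    ∀ ⦃x y⦄, X.Adj x y → ∃ u ∈ U x, ∃ v ∈ U y, G.Adj u v

/-- The `(a × b)`-grid graph. -/
def gridGraph (a b : ℕ) : SimpleGraph (Fin a × Fin b) :=
  SimpleGraph.fromRel (fun u v =>
    (u.1 = v.1 ∧ u.2.1 + 1 = v.2.1) ∨ (u.2 = v.2 ∧ u.1.1 + 1 = v.1.1))

/-- A `K`-fat model of `X` in `G`: disjoint connected branch sets joined by internally
disjoint branch paths, all pairwise at distance at least `K` except for a branch path and
the branch sets of its endpoints. -/
structure FatModel {V W : Type*} (G : SimpleGraph V) (X : SimpleGraph W) (K : ℕ) where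
  branch : W → Set V
  branch_nonempty : ∀ x, (branch x).Nonempty
  branch_connected : ∀ x, SetConn G (branch x)
  branch_disjoint : ∀ ⦃x y⦄, x ≠ y → Disjoint (branch x) (branch y)
  pathEnd : ∀ ⦃x y⦄, X.Adj x y → V
  path : ∀ ⦃x y⦄ (e : X.Adj x y), G.Walk (pathEnd e) (pathEnd e.symm)
  path_isPath : ∀ ⦃x y⦄ (e : X.Adj x y), (path e).IsPath
  path_symm : ∀ ⦃x y⦄ (e : X.Adj x y), path e.symm = (path e).reverse
  pathEnd_mem : ∀ ⦃x y⦄ (e : X.Adj x y), pathEnd e ∈ branch x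
  path_meets : ∀ ⦃x y⦄ (e : X.Adj x y) (z : W) (v : V), v ∈ (path e).support → v ∈ branch z →
    (z = x ∧ v = pathEnd e) ∨ (z = y ∧ v = pathEnd e.symm)
  path_int_disjoint : ∀ ⦃x y x' y'⦄ (e : X.Adj x y) (e' : X.Adj x' y'), s(x, y) ≠ s(x', y') →
    ∀ v, v ∈ (path e).support → v ∈ (path e').support → v = pathEnd e' ∨ v = pathEnd e'.symm
  fat_branch : ∀ ⦃x y⦄, x ≠ y → (K : ℕ∞) ≤ sDist G (branch x) (branch y)
  fat_path_branch : ∀ ⦃x y⦄ (e : X.Adj x y) (z : W), z ≠ x → z ≠ y →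
    (K : ℕ∞) ≤ sDist G (walkSupp (path e)) (branch z)
  fat_paths : ∀ ⦃x y x' y'⦄ (e : X.Adj x y) (e' : X.Adj x' y'), s(x, y) ≠ s(x', y') →
    (K : ℕ∞) ≤ sDist G (walkSupp (path e)) (walkSupp (path e'))

/-- `X` is a `K`-fat minor of `G`. -/
def IsFatMinor {V W : Type*} (G : SimpleGraph V) (X : SimpleGraph W) (K : ℕ) : Prop :=
  Nonempty (FatModel G X K)

/-- `W` is a `K`-fat `n`-path-connected set in `G`. -/
def FatPathConn {V : Type*} (G : SimpleGraph V) (K n : ℕ) (W : Set V) : Prop :=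
  (∃ S : Finset V, ↑S ⊆ W ∧ 2 * n ≤ S.card) ∧
  (∀ ⦃u v : V⦄, u ∈ W → v ∈ W → u ≠ v → (K : ℕ∞) ≤ G.edist u v) ∧
  ∀ l : ℕ, l ≤ n → ∀ A B : Finset V, ↑A ⊆ W → ↑B ⊆ W → A.card = l → B.card = l →
    ∃ (a b : Fin l → V) (P : ∀ i : Fin l, G.Walk (a i) (b i)),
      (∀ i, (P i).IsPath) ∧ (∀ i, a i ∈ A ∧ b i ∈ B) ∧
      ∀ i j, i ≠ j → (K : ℕ∞) ≤ sDist G (walkSupp (P i)) (walkSupp (P j))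

end CGT

namespace Ghdm

/-- Raw vertex codes for the graphs `G_{h,d,m}`:
`path k` is the `k`-th vertex of the base path; `tree j i p` is the vertex at position `p`
of the `i`-th binary tree at level `j` (the root being position `[]`); and
`spine j i k t e s` is the `s`-th internal vertex of the spine from the `k`-th leaf of that
tree to the `e`-th element of the `t`-th local gluing set at level `j-1`. -/
inductive Raw : Type where
  | path (k : ℕ)
  | tree (j i : ℕ) (p : List Bool)
  | spine (j i k t e s : ℕ)
deriving DecidableEq

/-- `N = 2^{h+1} - 1`, the number of copies of `G_{h,d,m-1}` glued inside `G_{h,d,m}`. -/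
def NN (h : ℕ) : ℕ := 2 ^ (h + 1) - 1

/-- Canonical representative of a raw vertex code: all tree roots are identified with the
single root `tree m 1 []`, and the leftmost leaf of tree `i > 1` is identified with the
rightmost leaf of tree `i - 1` (consecutive copies are glued along these leaves). -/
def canon (h m : ℕ) : Raw → Raw
  | .tree j i p =>
    if p = [] then .tree m 1 []
    else if p = List.replicate h false ∧ 1 < i then .tree j (i - 1) (List.replicate h true)
    else .tree j i p
  | x => x

/-- The `q`-bit binary representation of `i` (most significant bit first);
`false` means "left". -/
def natToBits (q i : ℕ) : List Bool := (List.range q).map fun a => Nat.testBit i (q - 1 - a)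

/-- Position of the `k`-th leaf (1-based, from the left) in a binary tree of height `h`. -/
def leafPos (h k : ℕ) : List Bool := natToBits h (k - 1)

/-- The `e`-th element of the `g`-th gluing set `V^{jv}_g` (at level `jv`):
its element `e = 1` is an anchor of the base path, and its element `e ≥ 2` is a shared
extreme leaf of the trees at level `e`. -/
def VsetElem (h d jv g e : ℕ) : Raw :=
  if e = 1 then .path ((g - 1) * NN h ^ (jv - 1) * (d + 1))
  else if (g - 1) * NN h ^ (jv - e) = 0 then .tree e 1 (List.replicate h false)
  else .tree e ((g - 1) * NN h ^ (jv - e)) (List.replicate h true)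

/-- Valid (canonical) vertex codes of `G_{h,d,m}`. -/
def Valid (h d m : ℕ) : Raw → Prop
  | .path k => k ≤ (d + 1) * NN h ^ (m - 1)
  | .tree j i p => 2 ≤ j ∧ j ≤ m ∧ 1 ≤ i ∧ i ≤ NN h ^ (m - j) ∧ p.length ≤ h ∧
      (p = [] → j = m ∧ i = 1) ∧ (p = List.replicate h false → p ≠ [] → i = 1)
  | .spine j i k t e s => 2 ≤ j ∧ j ≤ m ∧ 1 ≤ i ∧ i ≤ NN h ^ (m - j) ∧
      1 ≤ k ∧ k ≤ 2 ^ h ∧ (t = 2 * k - 2 ∨ t = 2 * k + 1) ∧ 1 ≤ t ∧ t ≤ 2 ^ (h + 1) ∧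
      1 ≤ e ∧ e ≤ j - 1 ∧ 1 ≤ s ∧ s ≤ d

/-- Generating adjacencies between raw vertex codes: consecutive base path vertices,
parent/child in the binary trees, consecutive spine vertices, a spine and the leaf it
starts at, a spine and the gluing-set vertex it ends at (the latter collapsed to a single
edge when `d = 0`). -/
inductive rawAdj (h d : ℕ) : Raw → Raw → Prop
  | base (k : ℕ) : rawAdj h d (.path k) (.path (k + 1))
  | child (j i : ℕ) (p : List Bool) (b : Bool) : p.length < h →
      rawAdj h d (.tree j i p) (.tree j i (p ++ [b]))
  | step (j i k t e s : ℕ) : rawAdj h d (.spine j i k t e s) (.spine j i k t e (s + 1))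
  | toLeaf (j i k t e : ℕ) : rawAdj h d (.tree j i (leafPos h k)) (.spine j i k t e 1)
  | toV (j i k t e : ℕ) :
      rawAdj h d (.spine j i k t e d) (VsetElem h d (j - 1) ((i - 1) * NN h + t) e)
  | short (j i k t e : ℕ) : d = 0 → 1 ≤ k → k ≤ 2 ^ h → (t = 2 * k - 2 ∨ t = 2 * k + 1) →
      1 ≤ t → t ≤ 2 ^ (h + 1) → 1 ≤ e → e ≤ j - 1 →
      rawAdj h d (.tree j i (leafPos h k)) (VsetElem h d (j - 1) ((i - 1) * NN h + t) e)

/-- Adjacency of canonical representatives. -/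
def rel (h d m : ℕ) (x y : Raw) : Prop :=
  ∃ a b, rawAdj h d a b ∧ x = canon h m a ∧ y = canon h m b

/-- The vertex set of `G_{h,d,m}`. -/
def Verts (h d m : ℕ) : Set Raw := {x | Valid h d m x}

/-- The graph `G_{h,d,m}`. -/
def G (h d m : ℕ) : SimpleGraph (Verts h d m) :=
  (SimpleGraph.fromRel (rel h d m)).induce (Verts h d m)

/-- Lift a set of raw codes to a set of vertices of `G_{h,d,m}`. -/
def lift {h d m : ℕ} (S : Set Raw) : Set (Verts h d m) := Subtype.val ⁻¹' S

/-- The root `R(G_{h,d,m})`. -/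
def RootR (m : ℕ) : Raw := .tree m 1 []

/-- The gluing set `V^{jv}_g` of `G_{h,d,m}`, as a set of raw codes. -/
def VsetRaw (h d m jv g : ℕ) : Set Raw :=
  {x | ∃ e, 1 ≤ e ∧ e ≤ jv ∧ x = canon h m (VsetElem h d jv g e)}

/-- The set `S(G_{h,d,m})`. -/
def SsetR (h d m : ℕ) : Set Raw :=
  VsetRaw h d m (m - 1) 1 ∪ {canon h m (.tree m 1 (leafPos h 1))}

/-- The set `T(G_{h,d,m})`. -/
def TsetR (h d m : ℕ) : Set Raw :=
  VsetRaw h d m (m - 1) (2 ^ (h + 1)) ∪ {canon h m (.tree m 1 (leafPos h (2 ^ h)))}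

/-- For a vertex of the top binary tree at position `p`, the (1-based) index of the
leftmost leaf of the top tree below it. -/
def kOf (h : ℕ) (p : List Bool) : ℕ :=
  (p.foldl (fun a b => 2 * a + if b then 1 else 0) 0) * 2 ^ (h - p.length) + 1

/-- `S(Δ(x))` for the vertex `x` of the top binary tree `B(G_{h,d,m})` at position `p`. -/
def SDeltaR (h d m : ℕ) (p : List Bool) : Set Raw :=
  VsetRaw h d m (m - 1) (2 * kOf h p - 1) ∪ {canon h m (.tree m 1 (leafPos h (kOf h p)))}

/-- The leaf of `B(G_{h,d,m})` immediately to the left of the leftmost leaf below the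
top-tree vertex at position `p`; it is the unique leaf joined by spines to `S(Δ(x))`. -/
def leafLeftR (h m : ℕ) (p : List Bool) : Raw :=
  canon h m (.tree m 1 (leafPos h (kOf h p - 1)))

end Ghdm

/-!
Match `A` with `B` inside the row greedily: a pair `(p, q) ∈ A × B` whose interval `[[p, q]]` is
inclusion-minimal has no other point of `A ∪ B` in its interval, so it can be split off. Route the
`k`-th pair through the grid along an arch: leave row `i` in columns `p` and `q`, and cross over
in the `k`-th row of the sequence `i, i + 1, …, b - 1, i - 1, …, 0`. An arch lies in the box
`[[p, q]] × [[i, r]]`, and a later arch leaves row `i` in columns outside `[[p, q]]` and crosses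
over in a row outside `[[i, r]]`, so the arches are disjoint. The parts of the fat model lying over
disjoint connected sets of the grid are connected and far apart, which turns arches into paths.
-/

section Order

open Set
open scoped Interval

lemma exists_isolated_pair {α : Type*} [DistribLattice α] {A B : Finset α} (hA : A.Nonempty)
    (hB : B.Nonempty) :
    ∃ p ∈ A, ∃ q ∈ B, (∀ x ∈ A, x ∈ [[p, q]] → x = p) ∧ ∀ y ∈ B, y ∈ [[p, q]] → y = q := by
  obtain ⟨⟨p, q⟩, hpq, hmin⟩ := (A ×ˢ B).finite_toSet.exists_minimalFor
    (fun z : α × α ↦ [[z.1, z.2]]) _ (hA.product hB)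
  obtain ⟨hp, hq⟩ := Finset.mem_product.1 hpq
  refine ⟨p, hp, q, hq, fun x hx hxpq ↦ ?_, fun y hy hypq ↦ ?_⟩
  · have hle : [[p, q]] ⊆ [[x, q]] :=
      hmin (j := (x, q)) (Finset.mk_mem_product hx hq) (uIcc_subset_uIcc_right hxpq)
    exact eq_of_mem_uIcc_of_mem_uIcc hxpq (hle left_mem_uIcc)
  · have hle : [[p, q]] ⊆ [[p, y]] :=
      hmin (j := (p, y)) (Finset.mk_mem_product hp hy) (uIcc_subset_uIcc_left hypq)
    exact eq_of_mem_uIcc_of_mem_uIcc' hypq (hle right_mem_uIcc)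

lemma exists_matching_notMem_uIcc {α : Type*} [DistribLattice α] {l : ℕ} {A B : Finset α}
    (hA : A.card = l) (hB : B.card = l) :
    ∃ p q : Fin l → α, (∀ k, p k ∈ A ∧ q k ∈ B) ∧
      ∀ j k, j < k → p k ∉ [[p j, q j]] ∧ q k ∉ [[p j, q j]] := by
  classical
  induction l generalizing A B with
  | zero => exact ⟨Fin.elim0, Fin.elim0, fun k ↦ k.elim0, fun k ↦ k.elim0⟩
  | succ l ih =>
    have hA_ne : A.Nonempty := Finset.card_pos.1 (by lia)
    have hB_ne : B.Nonempty := Finset.card_pos.1 (by lia)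
    obtain ⟨p₀, hp₀, q₀, hq₀, hA₀, hB₀⟩ := exists_isolated_pair hA_ne hB_ne
    obtain ⟨p, q, hpq, hsep⟩ := ih (A := A.erase p₀) (B := B.erase q₀)
      (by rw [Finset.card_erase_of_mem hp₀, hA, Nat.add_sub_cancel])
      (by rw [Finset.card_erase_of_mem hq₀, hB, Nat.add_sub_cancel])
    simp only [Finset.mem_erase] at hpq
    refine ⟨Fin.cons p₀ p, Fin.cons q₀ q,
      Fin.cases ⟨hp₀, hq₀⟩ fun k ↦ ⟨(hpq k).1.2, (hpq k).2.2⟩,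
      Fin.cases (Fin.cases (fun h ↦ (lt_irrefl _ h).elim) fun k _ ↦ ?_) fun j ↦
        Fin.cases (fun h ↦ (Fin.not_lt_zero _ h).elim) fun k hjk ↦ ?_⟩
    · exact ⟨fun h ↦ (hpq k).1.1 (hA₀ _ (hpq k).1.2 h), fun h ↦ (hpq k).2.1 (hB₀ _ (hpq k).2.2 h)⟩
    · exact hsep j k (Fin.succ_lt_succ_iff.1 hjk)

lemma exists_sequence_notMem_uIcc {b : ℕ} (i : Fin b) :
    ∃ r : Fin b → Fin b, ∀ j k, j < k → r k ∉ [[i, r j]] := by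
  -- The sequence `i, i + 1, …, b - 1, i - 1, …, 0`.
  refine ⟨fun k ↦ ⟨if i + k < b then i + k else b - 1 - k, by split_ifs <;> omega⟩,
    fun j k hjk ↦ ?_⟩
  simp only [mem_uIcc, Fin.le_def, Fin.lt_def] at hjk ⊢
  split_ifs <;> omega

end Order

namespace CGT

open Set
open scoped Interval

variable {V X : Type*} {G : SimpleGraph V} {H : SimpleGraph X}

section SDist

lemma le_sDist_iff {c : ℕ∞} {A B : Set V} :
    c ≤ sDist G A B ↔ ∀ u ∈ A, ∀ v ∈ B, c ≤ G.edist u v := by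
  simp [sDist, le_iInf_iff]

lemma sDist_anti {A A' B B' : Set V} (hA : A ⊆ A') (hB : B ⊆ B') :
    sDist G A' B' ≤ sDist G A B :=
  le_sDist_iff.2 fun u hu v hv ↦ le_sDist_iff.1 le_rfl u (hA hu) v (hB hv)

end SDist

section SetConn

lemma SetConn.image {U : Set V} (hU : SetConn G U) (f : G →g H) : SetConn H (f '' U) :=
  Connected.map (induceHom f (mapsTo_image f U)) imageFactorization_surjective hU

lemma SetConn.union {U U' : Set V} (hU : SetConn G U) (hU' : SetConn G U')
    (h : (U ∩ U').Nonempty) : SetConn G (U ∪ U') :=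
  induce_union_connected hU.preconnected hU'.preconnected h

lemma SetConn.reachable_induce {U S : Set V} (hU : SetConn G U) (hUS : U ⊆ S) {u v : V}
    (hu : u ∈ U) (hv : v ∈ U) : (G.induce S).Reachable ⟨u, hUS hu⟩ ⟨v, hUS hv⟩ :=
  (hU.preconnected ⟨u, hu⟩ ⟨v, hv⟩).map (induceHomOfLE G hUS).toHom

lemma SetConn.exists_isPath {S : Set V} (hS : SetConn G S) {u v : V} (hu : u ∈ S) (hv : v ∈ S) :
    ∃ p : G.Walk u v, p.IsPath ∧ walkSupp p ⊆ S := by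
  obtain ⟨p, hp⟩ := Connected.exists_isPath hS ⟨u, hu⟩ ⟨v, hv⟩
  refine ⟨p.map (Embedding.induce S).toHom, hp.map Subtype.val_injective, fun t ht ↦ ?_⟩
  obtain ⟨s, -, rfl⟩ := List.mem_map.1 ((congrArg (t ∈ ·) (p.support_map _)).mp ht)
  exact s.2

lemma setConn_hasse_of_ordConnected {α : Type*} [LinearOrder α] [SuccOrder α]
    [IsSuccArchimedean α] {I : Set α} (hI : I.OrdConnected) (hne : I.Nonempty) :
    SetConn (hasse α) I := by
  have : Nonempty I := hne.to_subtype
  have hcov (x y : I) : (x : α) ⋖ y ↔ x ⋖ y :=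
    OrdConnected.apply_covBy_apply_iff (OrderEmbedding.subtype (· ∈ I)) (by simpa using hI)
  have hIhasse : (hasse α).induce I = hasse I := by
    ext x y
    simp only [comap_adj, Function.Embedding.subtype_apply, hasse_adj, hcov]
  rw [SetConn, hIhasse]
  exact ⟨hasse_preconnected_of_succ I⟩

end SetConn

namespace FatModel

variable {K : ℕ} (M : FatModel G H K) {S S' : Set X}

/-- The part of a fat model lying over a set `S` of vertices of `H`: the branch sets of the
vertices in `S` together with the branch paths of the edges with both ends in `S`. -/
def partOver (S : Set X) : Set V :=
  {v | (∃ x ∈ S, v ∈ M.branch x) ∨ ∃ x ∈ S, ∃ y ∈ S, ∃ e : H.Adj x y, v ∈ walkSupp (M.path e)}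

lemma branch_subset_partOver {x : X} (hx : x ∈ S) : M.branch x ⊆ M.partOver S :=
  fun _ hv ↦ Or.inl ⟨x, hx, hv⟩

lemma walkSupp_path_subset_partOver {x y : X} (hx : x ∈ S) (hy : y ∈ S) (e : H.Adj x y) :
    walkSupp (M.path e) ⊆ M.partOver S :=
  fun _ hv ↦ Or.inr ⟨x, hx, y, hy, e, hv⟩

lemma le_sDist_partOver (h : Disjoint S S') :
    (K : ℕ∞) ≤ sDist G (M.partOver S) (M.partOver S') := by
  have hne {x y : X} (hx : x ∈ S) (hy : y ∈ S') : x ≠ y := h.ne_of_mem hx hy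
  rw [le_sDist_iff]
  rintro u (⟨x, hx, hu⟩ | ⟨x, hx, x', hx', e, hu⟩) v (⟨y, hy, hv⟩ | ⟨y, hy, y', hy', f, hv⟩)
  · exact le_sDist_iff.1 (M.fat_branch (hne hx hy)) u hu v hv
  · rw [edist_comm]
    exact le_sDist_iff.1 (M.fat_path_branch f x (hne hx hy) (hne hx hy')) v hv u hu
  · exact le_sDist_iff.1 (M.fat_path_branch e y (hne hx hy).symm (hne hx' hy).symm) u hu v hv
  · refine le_sDist_iff.1 (M.fat_paths e f fun hef ↦ ?_) u hu v hv
    rcases Sym2.eq_iff.1 hef with ⟨hxy, -⟩ | ⟨hxy', -⟩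
    exacts [hne hx hy hxy, hne hx hy' hxy']

lemma setConn_partOver (hS : SetConn H S) : SetConn G (M.partOver S) := by
  obtain ⟨x₀, hx₀⟩ := hS.nonempty
  obtain ⟨u₀, hu₀⟩ := M.branch_nonempty x₀
  have reach_path {x y : X} (hx : x ∈ S) (hy : y ∈ S) (e : H.Adj x y) {v : V}
      (hv : v ∈ walkSupp (M.path e)) :
      (G.induce (M.partOver S)).Reachable ⟨_, M.branch_subset_partOver hx (M.pathEnd_mem e)⟩
        ⟨v, M.walkSupp_path_subset_partOver hx hy e hv⟩ :=
    SetConn.reachable_induce (M.path e).connected_induce_support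
      (M.walkSupp_path_subset_partOver hx hy e) (M.path e).start_mem_support hv
  have reach_branch (x : S) : ∀ {v : V} (hv : v ∈ M.branch x),
      (G.induce (M.partOver S)).Reachable ⟨u₀, M.branch_subset_partOver hx₀ hu₀⟩
        ⟨v, M.branch_subset_partOver x.2 hv⟩ := by
    have hx := (reachable_iff_reflTransGen _ _).1 (hS.preconnected ⟨x₀, hx₀⟩ x)
    induction hx with
    | refl => exact (M.branch_connected x₀).reachable_induce (M.branch_subset_partOver hx₀) hu₀
    | @tail y z _ e ih =>
      intro v hv
      have e : H.Adj y z := e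
      exact ((ih (M.pathEnd_mem e)).trans
        (reach_path y.2 z.2 e (M.path e).end_mem_support)).trans
        ((M.branch_connected z).reachable_induce (M.branch_subset_partOver z.2)
          (M.pathEnd_mem e.symm) hv)
  refine (connected_iff_exists_forall_reachable _).2 ⟨⟨u₀, M.branch_subset_partOver hx₀ hu₀⟩, ?_⟩
  rintro ⟨v, ⟨x, hx, hv⟩ | ⟨x, hx, y, hy, e, hv⟩⟩
  · exact reach_branch ⟨x, hx⟩ hv
  · exact (reach_branch ⟨x, hx⟩ (M.pathEnd_mem e)).trans (reach_path hx hy e hv)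

lemma exists_far_paths {ι : Type*} {S : ι → Set X} (hS : ∀ k, SetConn H (S k))
    (hdisj : Pairwise (Function.onFun Disjoint S)) {x y : ι → X} (hx : ∀ k, x k ∈ S k)
    (hy : ∀ k, y k ∈ S k) {u v : ι → V} (hu : ∀ k, u k ∈ M.branch (x k))
    (hv : ∀ k, v k ∈ M.branch (y k)) :
    ∃ P : ∀ k, G.Walk (u k) (v k), (∀ k, (P k).IsPath) ∧
      ∀ j k, j ≠ k → (K : ℕ∞) ≤ sDist G (walkSupp (P j)) (walkSupp (P k)) := by
  choose P hP hPS using fun k ↦ (M.setConn_partOver (hS k)).exists_isPath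
    (M.branch_subset_partOver (hx k) (hu k)) (M.branch_subset_partOver (hy k) (hv k))
  exact ⟨P, hP, fun j k hjk ↦ (M.le_sDist_partOver (hdisj hjk)).trans (sDist_anti (hPS j) (hPS k))⟩

lemma injective_of_mem_branch {ι : Type*} {f : ι → X} (hf : f.Injective) {w : ι → V}
    (hw : ∀ x, w x ∈ M.branch (f x)) : w.Injective := by
  intro x y hxy
  by_contra hne
  exact (M.branch_disjoint (hf.ne hne)).ne_of_mem (hw x) (hw y) hxy

end FatModel

section Grid

variable {a b : ℕ}

lemma gridGraph_eq_boxProd (a b : ℕ) : gridGraph a b = pathGraph a □ pathGraph b := by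
  ext u v
  simp only [gridGraph, fromRel_adj, boxProd_adj, pathGraph_adj, Prod.ext_iff, Fin.ext_iff, ne_eq]
  omega

/-- The arch in the grid that leaves row `i` in columns `p` and `q` and crosses over in row `r`. -/
def arch (i r : Fin b) (p q : Fin a) : Set (Fin a × Fin b) :=
  {p} ×ˢ [[i, r]] ∪ [[p, q]] ×ˢ {r} ∪ {q} ×ˢ [[i, r]]

variable {i r r' : Fin b} {p q p' q' : Fin a}

lemma left_mem_arch : (p, i) ∈ arch i r p q := Or.inl (Or.inl ⟨rfl, left_mem_uIcc⟩)

lemma right_mem_arch : (q, i) ∈ arch i r p q := Or.inr ⟨rfl, left_mem_uIcc⟩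

lemma setConn_arch : SetConn (gridGraph a b) (arch i r p q) := by
  have hcol (c : Fin a) : SetConn (gridGraph a b) ({c} ×ˢ [[i, r]]) := by
    rw [gridGraph_eq_boxProd, singleton_prod]
    exact (setConn_hasse_of_ordConnected ordConnected_uIcc nonempty_uIcc).image
      (boxProdRight (pathGraph a) _ c).toHom
  have hrow : SetConn (gridGraph a b) ([[p, q]] ×ˢ {r}) := by
    rw [gridGraph_eq_boxProd, prod_singleton]
    exact (setConn_hasse_of_ordConnected ordConnected_uIcc nonempty_uIcc).image
      (boxProdLeft _ (pathGraph b) r).toHom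
  exact ((hcol p).union hrow ⟨(p, r), by simp⟩).union (hcol q) ⟨(q, r), by simp⟩

lemma arch_subset_uIcc_prod_uIcc : arch i r p q ⊆ [[p, q]] ×ˢ [[i, r]] := by
  refine union_subset (union_subset ?_ ?_) ?_ <;> gcongr <;> simp

lemma disjoint_arch (hp : p' ∉ [[p, q]]) (hq : q' ∉ [[p, q]]) (hr : r' ∉ [[i, r]]) :
    Disjoint (arch i r p q) (arch i r' p' q') := by
  refine Disjoint.mono_left arch_subset_uIcc_prod_uIcc ?_
  simp only [arch, disjoint_union_right, disjoint_prod, disjoint_singleton_right]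
  exact ⟨⟨.inl hp, .inr hr⟩, .inl hq⟩

lemma exists_disjoint_setConn_linking_row (i : Fin b) {l : ℕ} (hl : l ≤ b) {A B : Finset (Fin a)}
    (hA : A.card = l) (hB : B.card = l) :
    ∃ (p q : Fin l → Fin a) (S : Fin l → Set (Fin a × Fin b)),
      (∀ k, p k ∈ A ∧ q k ∈ B) ∧ (∀ k, SetConn (gridGraph a b) (S k)) ∧
      Pairwise (Function.onFun Disjoint S) ∧
      (∀ k, (p k, i) ∈ S k) ∧ ∀ k, (q k, i) ∈ S k := by
  obtain ⟨p, q, hpq, hsep⟩ := exists_matching_notMem_uIcc hA hB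
  obtain ⟨r, hr⟩ := exists_sequence_notMem_uIcc i
  refine ⟨p, q, fun k ↦ arch i (r (k.castLE hl)) (p k) (q k), hpq, fun _ ↦ setConn_arch,
    .of_lt fun j k hjk ↦ ?_, fun _ ↦ left_mem_arch, fun _ ↦ right_mem_arch⟩
  exact disjoint_arch (hsep j k hjk).1 (hsep j k hjk).2 (hr _ _ hjk)

end Grid

end CGT

open CGT in
theorem statement11_general {V : Type*} {G : SimpleGraph V} {K n a b : ℕ} (ha : 2 * n ≤ a)
    (hb : n ≤ b) (M : FatModel G (gridGraph a b) K) (i : Fin b) {w : Fin a → V}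
    (hw : ∀ x, w x ∈ M.branch (x, i)) : FatPathConn G K n (Set.range w) := by
  classical
  have hinj : w.Injective := M.injective_of_mem_branch (Prod.mk_left_injective i) hw
  refine ⟨⟨Finset.univ.image w, by simp, ?_⟩, ?_, ?_⟩
  · simpa [Finset.card_image_of_injective _ hinj] using ha
  · rintro _ _ ⟨x, rfl⟩ ⟨y, rfl⟩ hne
    have hxy : (x, i) ≠ (y, i) := fun h ↦ hne (congrArg w (Prod.mk_left_injective i h))
    exact le_sDist_iff.1 (M.fat_branch hxy) _ (hw x) _ (hw y)
  · intro l hl A B hA hB hAl hBl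
    rw [← Set.image_univ, Finset.subset_set_image_iff] at hA hB
    obtain ⟨A, -, rfl⟩ := hA
    obtain ⟨B, -, rfl⟩ := hB
    rw [Finset.card_image_of_injective _ hinj] at hAl hBl
    obtain ⟨p, q, S, hpq, hS, hdisj, hp, hq⟩ :=
      exists_disjoint_setConn_linking_row i (hl.trans hb) hAl hBl
    obtain ⟨P, hP, hfar⟩ :=
      M.exists_far_paths hS hdisj hp hq (fun k ↦ hw (p k)) (fun k ↦ hw (q k))
    exact ⟨_, _, P, hP, fun k ↦ ⟨Finset.mem_image_of_mem w (hpq k).1,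
      Finset.mem_image_of_mem w (hpq k).2⟩, hfar⟩

/-- in a `K`-fat model of the `(2n × n)`-grid in `G`, any set `W` consisting
of exactly one vertex from each branch set of the `i`-th row is `K`-fat
`n`-path-connected. -/
theorem statement11 (K n : ℕ) {V : Type*} (G : SimpleGraph V)
    (Mo : CGT.FatModel G (CGT.gridGraph (2 * n) n) K)
    (i : Fin n) (w : Fin (2 * n) → V) (hw : ∀ x, w x ∈ Mo.branch (x, i))
    (W : Set V) (hW : W = Set.range w) :
    CGT.FatPathConn G K n W := by
  subst hW
  exact statement11_general le_rfl le_rfl Mo i hw
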